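/- Let 𝒫 be an admissible set of abstract patterns in ℝ^d. Then the following are equivalent: (i) 𝒫 is linearly repetitive, i.e. there is a constant c_LR > 0 such that every Q ∈ 𝒫 with r_out(Q) ≥ 1 is a subpattern of every P ∈ 𝒫 with r_in(P) ≥ c_LR · r_out(Q); (ii) there is a constant c_{LR,b} > 0 such that for every r ≥ 1, every P ∈ 𝒫(r) satisfies P ⊂ Q for every Q ∈ 𝒫(c_{LR,b} · r). -/

import Mathlib

open Metric Set Filter MeasureTheory Topology

noncomputable section

/-- Points of `ℝ^d`. -/
abbrev Pt (d : ℕ) := EuclideanSpace ℝ (Fin d)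

variable (d : ℕ)

/-- A tile: a subset of `ℝ^d` homeomorphic to the closed unit ball. -/
def IsTile (m : Set (Pt d)) : Prop :=
  Nonempty (m ≃ₜ (Metric.closedBall (0 : Pt d) 1))

/-- A pattern: a finite nonempty collection of tiles whose interiors are pairwise disjoint. -/
def IsPattern (M : Set (Set (Pt d))) : Prop :=
  M.Finite ∧ M.Nonempty ∧ (∀ m ∈ M, IsTile d m) ∧
    M.Pairwise fun m m' => interior m ∩ interior m' = ∅

/-- A tiling of `ℝ^d`: a collection of tiles with pairwise disjoint interiors covering `ℝ^d`. -/
def IsTiling (T : Set (Set (Pt d))) : Prop :=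
  (∀ m ∈ T, IsTile d m) ∧
    (T.Pairwise fun m m' => interior m ∩ interior m' = ∅) ∧ ⋃₀ T = Set.univ

/-- Translation of a pattern by `t`. -/
def patTrans (t : Pt d) (M : Set (Set (Pt d))) : Set (Set (Pt d)) :=
  (fun m => (fun x => x + t) '' m) '' M

/-- Support (underlying set) of a pattern. -/
def supp (M : Set (Set (Pt d))) : Set (Pt d) := ⋃₀ M

/-- Inner radius: the largest `r` such that some closed ball of radius `r` fits inside `s(M)`. -/
def rIn (M : Set (Set (Pt d))) : ℝ :=
  sSup {r : ℝ | ∃ x : Pt d, Metric.closedBall x r ⊆ supp d M}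

/-- Outer radius: the smallest `r` such that some closed ball of radius `r` contains `s(M)`. -/
def rOut (M : Set (Set (Pt d))) : ℝ :=
  sInf {r : ℝ | ∃ x : Pt d, supp d M ⊆ Metric.closedBall x r}

/-- The pattern class of `P` is a subpattern of (the class of) `Q`:
some translate of `P` is contained in `Q`. -/
def SubpatternClass (P Q : Set (Set (Pt d))) : Prop :=
  ∃ t : Pt d, patTrans d t P ⊆ Q

/-- A set of abstract patterns is modelled as a translation-closed set `Ps` of concrete
patterns (the union of the pattern classes).  `Admissible` encodes conditions
(i)–(iii) of Definition 2.1. -/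
structure Admissible (Ps : Set (Set (Set (Pt d)))) : Prop where
  pattern : ∀ P ∈ Ps, IsPattern d P
  transClosed : ∀ (t : Pt d), ∀ P ∈ Ps, patTrans d t P ∈ Ps
  subClosed : ∀ P ∈ Ps, ∀ Q : Set (Set (Pt d)), IsPattern d Q → Q ⊆ P → Q ∈ Ps
  tileBounds : ∃ rmin rmax : ℝ, 0 < rmin ∧ rmin ≤ rmax ∧
    ∀ m : Set (Pt d), ({m} : Set (Set (Pt d))) ∈ Ps →
      rmin ≤ rIn d {m} ∧ rIn d {m} ≤ rOut d {m} ∧ rOut d {m} ≤ rmax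
  extend : ∀ P ∈ Ps, (0 : Pt d) ∈ supp d P → ∀ r : ℝ, 0 < r →
    ∃ Q ∈ Ps, P ⊆ Q ∧ Metric.closedBall (0 : Pt d) r ⊆ supp d Q

/-- Linear repetitivity of a (translation-closed) set of patterns. -/
def LinearlyRepetitive (Ps : Set (Set (Set (Pt d)))) : Prop :=
  ∃ c : ℝ, 0 < c ∧ ∀ P ∈ Ps, 1 ≤ rOut d P →
    ∀ Q ∈ Ps, c * rOut d P ≤ rIn d Q → SubpatternClass d P Q

/-- The box determined by corner functions `a b : Fin d → ℝ`. -/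
def boxSet (a b : Fin d → ℝ) : Set (Pt d) := {x | ∀ j, x j ∈ Set.Icc (a j) (b j)}

/-- `B` is a box. -/
def IsBox (B : Set (Pt d)) : Prop :=
  ∃ a b : Fin d → ℝ, (∀ j, a j < b j) ∧ B = boxSet d a b

/-- `B` is an `r`-box: all side lengths lie in `[r, 2r]`. -/
def IsRBox (r : ℝ) (B : Set (Pt d)) : Prop :=
  ∃ a b : Fin d → ℝ, (∀ j, a j < b j) ∧ B = boxSet d a b ∧
    ∀ j, r ≤ b j - a j ∧ b j - a j ≤ 2 * r

/-- Width of a box: the minimum of its side lengths. -/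
def widthOf (B : Set (Pt d)) : ℝ :=
  ⨅ j : Fin d, (sSup ((fun x : Pt d => x j) '' B) - sInf ((fun x : Pt d => x j) '' B))

/-- Volume of a subset of `ℝ^d`. -/
def volOf (B : Set (Pt d)) : ℝ := (volume B).toReal

/-- Restriction `M ∩ B` of a pattern or tiling `M` to `B`. -/
def patRestrict (M : Set (Set (Pt d))) (B : Set (Pt d)) : Set (Set (Pt d)) :=
  {s | ∃ m ∈ M, (m ∩ interior B).Nonempty ∧ s = m ∩ B}

/-- The set `Ps_B` of box-patterns derived from `Ps` (concrete representatives). -/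
def BoxPatterns (Ps : Set (Set (Set (Pt d)))) : Set (Set (Set (Pt d))) :=
  {Q | ∃ P ∈ Ps, ∃ B : Set (Pt d), IsBox d B ∧ B ⊆ supp d P ∧ Q = patRestrict d P B}

/-- The set `Ps(r)` of `r`-patterns derived from `Ps`. -/
def RPatterns (Ps : Set (Set (Set (Pt d)))) (r : ℝ) : Set (Set (Set (Pt d))) :=
  {Q | ∃ P ∈ Ps, ∃ B : Set (Pt d), IsRBox d r B ∧ B ⊆ supp d P ∧ Q = patRestrict d P B}

/-- Width of a box-pattern. -/
def patWidth (M : Set (Set (Pt d))) : ℝ := widthOf d (supp d M)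

/-- Volume of a box-pattern. -/
def patVol (M : Set (Set (Pt d))) : ℝ := volOf d (supp d M)

/-- A subadditive function on `Ps_B`, with constants `dF, rF` and error function `cF`.
`F` is defined on concrete patterns and is translation-invariant (i.e. well defined on
pattern classes). -/
structure SubadditiveOn (Ps : Set (Set (Set (Pt d)))) (F : Set (Set (Pt d)) → ℝ)
    (dF rF : ℝ) (cF : ℝ → ℝ) : Prop where
  invariant : ∀ (t : Pt d), ∀ M ∈ BoxPatterns d Ps, F (patTrans d t M) = F M
  dF_nonneg : 0 ≤ dF
  rF_nonneg : 0 ≤ rF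
  cF_anti : ∀ r s : ℝ, rF ≤ r → r ≤ s → cF s ≤ cF r
  cF_lim : Tendsto cF atTop (nhds 0)
  subadd : ∀ M ∈ BoxPatterns d Ps, ∀ (n : ℕ) (Bj : Fin n → Set (Pt d)),
    (∀ j, IsBox d (Bj j)) →
    (∀ i j, i ≠ j → interior (Bj i) ∩ interior (Bj j) = ∅) →
    (⋃ j, Bj j) = supp d M →
    (∀ j, rF ≤ widthOf d (Bj j)) →
    F M ≤ (∑ j, F (patRestrict d M (Bj j))) +
      ∑ j, cF (widthOf d (Bj j)) * volOf d (Bj j)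
  bound : ∀ M ∈ BoxPatterns d Ps, |F M| ≤ dF * patVol d M

/-- The upper mean `F⁺(r)`. -/
def Fplus (Ps : Set (Set (Set (Pt d)))) (F : Set (Set (Pt d)) → ℝ) (r : ℝ) : ℝ :=
  sSup ((fun P => F P / patVol d P) '' RPatterns d Ps r)

/-- The lower mean `F⁻(r)`. -/
def Fminus (Ps : Set (Set (Set (Pt d)))) (F : Set (Set (Pt d)) → ℝ) (r : ℝ) : ℝ :=
  sInf ((fun P => F P / patVol d P) '' RPatterns d Ps r)


/-- The relation `P ⊂ Q` on box-patterns: some translate of `P` is the restriction of `Q`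
to a sub-box of the box underlying `Q`. -/
def BoxSubpattern (P Q : Set (Set (Pt d))) : Prop :=
  ∃ (t : Pt d) (B : Set (Pt d)), IsBox d B ∧ B ⊆ supp d Q ∧
    patTrans d t P = patRestrict d Q B

section Brouwer
variable {E : Type*} [NormedAddCommGroup E] [InnerProductSpace ℝ E] [FiniteDimensional ℝ E]

lemma aux_poly (A : E →L[ℝ] E) : ∃ p : Polynomial ℝ, p.natDegree ≤ Module.finrank ℝ E ∧
    ∀ t : ℝ, p.eval t = (ContinuousLinearMap.id ℝ E + t • A).det := by
  classical
  let b := Module.finBasis ℝ E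
  let M := LinearMap.toMatrix b b (A : E →ₗ[ℝ] E)
  refine ⟨((Polynomial.X : Polynomial ℝ) • M.map Polynomial.C + (1 : Matrix _ _ ℝ).map Polynomial.C).det, ?_, ?_⟩
  · have := Polynomial.natDegree_det_X_add_C_le M 1
    simpa using this
  · intro t
    rw [ContinuousLinearMap.det, ← LinearMap.det_toMatrix b]
    rw [← Polynomial.coe_evalRingHom, RingHom.map_det]
    congr 1
    ext i j
    simp [M, Matrix.map_apply, Matrix.one_apply, apply_ite]
    split_ifs <;> ring

lemma aux_interp (n : ℕ) (ε : ℝ) (hε : 0 < ε) : ∃ (v w : Fin (n+1) → ℝ), (∀ i, 0 < v i ∧ v i < ε) ∧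
    ∀ p : Polynomial ℝ, p.natDegree ≤ n → p.eval 1 = ∑ i, w i * p.eval (v i) := by
  classical
  let v : Fin (n+1) → ℝ := fun i => ε / (i + 2)
  have hv : Function.Injective v := by
    intro i j h
    simp only [v] at h
    rw [div_eq_div_iff (by positivity) (by positivity)] at h
    have := mul_left_cancel₀ hε.ne' h
    ext; have : (i:ℝ) = j := by linarith
    exact_mod_cast this
  refine ⟨v, fun i => (Lagrange.basis Finset.univ v i).eval 1, ?_, ?_⟩
  · intro i
    refine ⟨by positivity, ?_⟩
    simp only [v]
    rw [div_lt_iff₀ (by positivity)]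
    have : (0:ℝ) ≤ i := by positivity
    nlinarith
  · intro p hp
    have := Lagrange.eq_interpolate (s := Finset.univ) (v := v) (f := p) hv.injOn (by
      refine lt_of_le_of_lt Polynomial.degree_le_natDegree ?_
      simp; exact_mod_cast Nat.lt_succ_of_le hp)
    conv_lhs => rw [this]
    simp [Lagrange.interpolate_apply, Polynomial.eval_finsetSum, mul_comm]

lemma aux_lip {R : ℝ} {g : E → E} {K : NNReal} (hg : LipschitzOnWith K g (closedBall 0 R))
    (h0 : ∀ x, ‖x‖ = R → g x = 0) :
    LipschitzWith K ((closedBall (0:E) R).indicator g) := by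
  have key : ∀ x y : E, ‖x‖ ≤ R → R < ‖y‖ → ‖g x‖ ≤ K * dist x y := by
    intro x y hx hy
    have hc : ContinuousOn (fun s : ℝ => ‖x + s • (y - x)‖) (Icc 0 1) := by fun_prop
    obtain ⟨s, hs, hs'⟩ := intermediate_value_Icc zero_le_one hc (show R ∈ Icc _ _ by simp [hx, hy.le])
    simp only at hs'
    have := hg.dist_le_mul x (by simpa using hx) (x + s • (y-x)) (by simp [hs'])
    rw [h0 _ hs', dist_zero_right] at this
    refine this.trans ?_
    gcongr
    rw [dist_eq_norm, dist_comm, dist_eq_norm]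
    simp only [sub_add_cancel_left, norm_neg, norm_smul, Real.norm_eq_abs, abs_of_nonneg hs.1]
    nlinarith [norm_nonneg (y-x), hs.2]
  refine LipschitzWith.of_dist_le_mul fun x y => ?_
  by_cases hx : ‖x‖ ≤ R <;> by_cases hy : ‖y‖ ≤ R
  · rw [indicator_of_mem (by simpa), indicator_of_mem (by simpa)]
    exact hg.dist_le_mul x (by simpa) y (by simpa)
  · rw [indicator_of_mem (by simpa), indicator_of_notMem (by simpa using hy), dist_zero_right]
    exact key x y hx (not_le.1 hy)
  · rw [indicator_of_mem (a := y) (by simpa), indicator_of_notMem (a := x) (by simpa using hx), dist_zero_left, dist_comm]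
    exact key y x hy (not_le.1 hx)
  · rw [indicator_of_notMem (by simpa using hx), indicator_of_notMem (by simpa using hy)]
    simp; positivity

lemma aux_image {R : ℝ} {f : E → E} {K : NNReal}
    (hg : LipschitzOnWith K (fun x => f x - x) (closedBall 0 R))
    (h0 : ∀ x, ‖x‖ = R → f x = x) (t : ℝ) (ht0 : 0 < t) (ht : t * K < 1) :
    InjOn (fun x => x + t • (f x - x)) (closedBall 0 R) ∧
    (fun x => x + t • (f x - x)) '' (closedBall 0 R) = closedBall 0 R := by
  set G := (closedBall (0:E) R).indicator (fun x => f x - x) with hG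
  have hGL : LipschitzWith K G := aux_lip hg (fun x hx => by simp [h0 x hx])
  have happ : ApproximatesLinearOn (fun x => x + t • G x) ((ContinuousLinearEquiv.refl ℝ E) : E →L[ℝ] E) univ (Real.toNNReal t * K) := by
    intro x _ y _
    have := hGL.norm_sub_le x y
    have e : x + t • G x - (y + t • G y) - ((ContinuousLinearEquiv.refl ℝ E) : E →L[ℝ] E) (x - y) = t • (G x - G y) := by
      simp [smul_sub]; abel
    simp only [e, norm_smul, Real.norm_eq_abs, abs_of_pos ht0, NNReal.coe_mul, Real.coe_toNNReal t ht0.le]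
    rw [mul_assoc]; gcongr
  have hc : Subsingleton E ∨ (Real.toNNReal t * K : NNReal) < ‖((ContinuousLinearEquiv.refl ℝ E).symm : E →L[ℝ] E)‖₊⁻¹ := by
    rcases subsingleton_or_nontrivial E with h | h
    · exact Or.inl h
    · right
      simp
      rw [← NNReal.coe_lt_coe]; simpa [ht0.le] using ht
  have hinj := happ.injOn hc
  have hsurj := happ.surjective hc
  have heq : ∀ x ∈ closedBall (0:E) R, x + t • (f x - x) = x + t • G x := by
    intro x hx; simp [hG, indicator_of_mem hx]
  have hout : ∀ x ∉ ball (0:E) R, x + t • G x = x := by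
    intro x hx
    by_cases h : x ∈ closedBall (0:E) R
    · have : ‖x‖ = R := le_antisymm (by simpa using h) (by simpa using hx)
      simp [hG, indicator_of_mem h, h0 x this]
    · simp [hG, indicator_of_notMem h]
  refine ⟨?_, ?_⟩
  · intro x hx y hy h
    simp only [heq x hx, heq y hy] at h
    exact hinj trivial trivial h
  · rw [image_congr heq]
    ext y
    constructor
    · rintro ⟨x, hx, rfl⟩
      by_contra hy
      have := hout _ (fun h => hy (ball_subset_closedBall h))
      have := hinj trivial trivial this
      exact hy (by simp only at this ⊢; rw [this]; exact hx)
    · intro hy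
      obtain ⟨x, rfl⟩ := hsurj y
      by_cases hx : x ∈ closedBall (0:E) R
      · exact ⟨x, hx, rfl⟩
      · have := hout x (fun h => hx (ball_subset_closedBall h))
        simp only at hy
        rw [this] at hy
        exact absurd hy hx

variable [MeasurableSpace E] [BorelSpace E]

lemma no_retraction {R : ℝ} (hR : 0 < R) (f : E → E) (hf : ContDiff ℝ 1 f) (hn : ∀ x, ‖f x‖ = R)
    (h0 : ∀ x, ‖x‖ = R → f x = x) : False := by
  have hB : IsCompact (closedBall (0:E) R) := isCompact_closedBall 0 R
  obtain ⟨K, hK⟩ := ContDiffOn.exists_lipschitzOnWith (s := closedBall (0:E) R) (f := fun x => f x - x) (n := 1)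
    (by fun_prop) one_ne_zero (convex_closedBall 0 R) hB
  have hfd : Continuous (fderiv ℝ f) := hf.continuous_fderiv one_ne_zero
  let A : E → (E →L[ℝ] E) := fun x => fderiv ℝ f x - ContinuousLinearMap.id ℝ E
  have hA : Continuous A := by fun_prop
  have hder : ∀ (t : ℝ) (x : E), HasFDerivAt (fun x => x + t • (f x - x)) (ContinuousLinearMap.id ℝ E + t • A x) x := by
    intro t x
    have h1 : HasFDerivAt f (fderiv ℝ f x) x := (hf.differentiable one_ne_zero x).hasFDerivAt
    exact (hasFDerivAt_id x).add ((h1.sub (hasFDerivAt_id x)).const_smul t)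
  have hdet : Continuous (fun M : E →L[ℝ] E => (ContinuousLinearMap.id ℝ E + M).det) :=
    ContinuousLinearMap.continuous_det.comp (by fun_prop)
  have hpos : ∀ᶠ M in 𝓝 (0 : E →L[ℝ] E), 0 < (ContinuousLinearMap.id ℝ E + M).det := by
    apply hdet.continuousAt.eventually_const_lt
    simp [ContinuousLinearMap.det]
  obtain ⟨δ, hδ, hpos⟩ := Metric.eventually_nhds_iff.1 hpos
  obtain ⟨C, hC⟩ := hB.exists_bound_of_continuousOn (f := A) hA.continuousOn
  obtain ⟨v, w, hv, hw⟩ := aux_interp (Module.finrank ℝ E) (min (1 / (K + 1)) (δ / (|C| + 1)))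
    (by positivity)
  let μ : Measure E := volume
  have hint : ∀ t : ℝ, IntegrableOn (fun x => (ContinuousLinearMap.id ℝ E + t • A x).det) (closedBall (0:E) R) μ := by
    intro t
    exact (hdet.comp (hA.const_smul t)).continuousOn.integrableOn_compact hB
  have hI : ∀ i, ∫ x in closedBall (0:E) R, (ContinuousLinearMap.id ℝ E + v i • A x).det ∂μ = μ.real (closedBall 0 R) := by
    intro i
    obtain ⟨hv0, hv1⟩ := hv i
    obtain ⟨hv1, hv2⟩ := lt_min_iff.1 hv1
    rw [lt_div_iff₀ (by positivity)] at hv1 hv2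
    obtain ⟨hi1, hi2⟩ := aux_image hK h0 (v i) hv0 (by nlinarith)
    have := integral_image_eq_integral_abs_det_fderiv_smul μ (s := closedBall (0:E) R) measurableSet_closedBall
      (fun x _ => (hder (v i) x).hasFDerivWithinAt) hi1 (fun _ => (1:ℝ))
    rw [hi2] at this
    simp only [integral_const, smul_eq_mul, mul_one, MeasurableSet.univ, measureReal_restrict_apply, univ_inter] at this
    rw [this]
    refine setIntegral_congr_fun measurableSet_closedBall fun x hx => ?_
    rw [abs_of_pos]
    apply hpos
    rw [dist_zero_right, norm_smul, Real.norm_eq_abs, abs_of_pos hv0]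
    have := hC x hx
    nlinarith [le_abs_self C, abs_nonneg C]
  have hzero : ∀ x, (ContinuousLinearMap.id ℝ E + (1:ℝ) • A x).det = 0 := by
    intro x
    have e : ContinuousLinearMap.id ℝ E + (1:ℝ) • A x = fderiv ℝ f x := by simp [A]
    rw [e]
    by_contra hne
    have hd : HasFDerivAt f (fderiv ℝ f x) x := (hf.differentiable one_ne_zero x).hasFDerivAt
    have h1 := hd.norm_sq
    have h2 : (fun x => ‖f x‖ ^ 2) = fun _ => R ^ 2 := by ext; rw [hn]
    rw [h2] at h1
    have h3 := h1.unique (hasFDerivAt_const (R^2) x)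
    have hs : Function.Surjective (fderiv ℝ f x) := by
      have := ((fderiv ℝ f x).toContinuousLinearEquivOfDetNeZero hne).surjective
      exact this
    obtain ⟨u, hu⟩ := hs (f x)
    have h4 := congrArg (fun L => L u) h3
    simp [hu, hn, hR.ne'] at h4
  have e1 : ∫ x in closedBall (0:E) R, (ContinuousLinearMap.id ℝ E + (1:ℝ) • A x).det ∂μ = ∑ i, w i * ∫ x in closedBall (0:E) R, (ContinuousLinearMap.id ℝ E + v i • A x).det ∂μ := by
    simp only [← integral_const_mul]
    rw [← integral_finsetSum _ (fun i _ => (hint (v i)).const_mul _)]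
    refine integral_congr_ae (Eventually.of_forall fun x => ?_)
    obtain ⟨p, hp, hp'⟩ := aux_poly (A x)
    simp only [← hp']
    exact hw p hp
  have e2 : ∑ i, w i = 1 := by
    have := hw 1 (by simp)
    simpa using this.symm
  simp only [hI, hzero, integral_zero, ← Finset.sum_mul, e2, one_mul] at e1
  have : 0 < μ.real (closedBall (0:E) R) := 
    ENNReal.toReal_pos (measure_closedBall_pos μ 0 hR).ne' measure_closedBall_lt_top.ne
  linarith

lemma no_nonvanishing (k : E → E) (hk : Continuous k) (h1 : ∀ x, 1 ≤ ‖x‖ → k x = x)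
    (hne : ∀ x, k x ≠ 0) : False := by
  obtain ⟨g, hg, hgd, hgS, -⟩ := hk.exists_contDiff_approx_and_eqOn 1 (ε := fun x => ‖k x‖) hk.norm
    (fun x => norm_pos_iff.2 (hne x)) (S := {x | 2 ≤ ‖x‖}) (U := {x | 1 < ‖x‖})
    (isClosed_le continuous_const continuous_norm)
    ((isOpen_lt continuous_const continuous_norm).mem_nhdsSet.2 (fun x (hx : 2 ≤ ‖x‖) => lt_of_lt_of_le one_lt_two hx))
    (contDiffOn_id.congr fun x (hx : 1 < ‖x‖) => h1 x hx.le)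
  have hg0 : ∀ x, g x ≠ 0 := by
    intro x hx
    have := hgd x
    rw [hx, dist_zero_left] at this
    exact lt_irrefl _ this
  refine no_retraction (R := 2) two_pos (fun x => (2 / ‖g x‖) • g x) ?_ ?_ ?_
  · have : ContDiff ℝ 1 (fun x => ‖g x‖) := hg.norm ℝ hg0
    exact (contDiff_const.div this (fun x => norm_ne_zero_iff.2 (hg0 x))).smul hg
  · intro x
    have := norm_ne_zero_iff.2 (hg0 x)
    simp [norm_smul, this]
  · intro x hx
    have : g x = x := by rw [hgS (show 2 ≤ ‖x‖ from hx.ge)]; exact h1 x (by linarith)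
    simp [this, hx]

lemma exists_zero (h : E → E) (hh : Continuous h) (hc : ∀ x, ‖x‖ ≤ 1 → ‖h x - x‖ < 1/2) :
    ∃ x, ‖x‖ ≤ 1 ∧ h x = 0 := by
  by_contra! hcon
  let l : E → ℝ := fun x => max 0 (min 1 (2 - 2 * ‖x‖))
  refine no_nonvanishing (fun x => x + l x • (h x - x)) (by fun_prop) ?_ ?_
  · intro x hx
    have : l x = 0 := max_eq_left (min_le_of_right_le (by linarith))
    simp [this]
  · intro x hx
    rcases le_or_gt ‖x‖ (1/2) with h1 | h1
    · have : l x = 1 := by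
        simp only [l]; rw [min_eq_left (by linarith)]; simp
      simp [this] at hx
      exact hcon x (by linarith) hx
    · have hl0 : 0 ≤ l x := le_max_left _ _
      have hl1 : l x ≤ 1 := max_le zero_le_one (min_le_left _ _)
      rcases le_or_gt ‖x‖ 1 with h2 | h2
      · have h3 : x = - (l x • (h x - x)) := eq_neg_of_add_eq_zero_left hx
        have h4 : ‖x‖ = l x * ‖h x - x‖ := by
          conv_lhs => rw [h3]
          rw [norm_neg, norm_smul, Real.norm_eq_abs, abs_of_nonneg hl0]
        nlinarith [hc x h2, norm_nonneg (h x - x)]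
      · have : l x = 0 := max_eq_left (min_le_of_right_le (by linarith))
        simp [this] at hx
        rw [hx] at h1; simp at h1; linarith

lemma interior_image_nonempty (f : E → E) (hf : ContinuousOn f (closedBall 0 1))
    (hinj : InjOn f (closedBall 0 1)) : (interior (f '' closedBall 0 1)).Nonempty := by
  by_contra hemp
  rw [not_nonempty_iff_eq_empty] at hemp
  set X := f '' closedBall 0 1 with hX
  have hXc : IsCompact X := (isCompact_closedBall (0:E) 1).image_of_continuousOn hf
  let φ : closedBall (0:E) 1 → E := (closedBall (0:E) 1).domRestrict f
  have hφ : Continuous φ := hf.domRestrict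
  have hcb : CompactSpace (closedBall (0:E) 1) := isCompact_iff_compactSpace.1 (isCompact_closedBall 0 1)
  have hφe : IsClosedEmbedding φ := hφ.isClosedEmbedding (injOn_iff_injective.1 hinj)
  obtain ⟨F, hF⟩ := ContinuousMap.exists_extension (Y := E) (isClosed_closedBall (x := (0:E)) (ε := 1)).isClosedEmbedding_subtypeVal ⟨φ, hφ⟩
  obtain ⟨G, hG⟩ := ContinuousMap.exists_extension (Y := E) hφe ⟨Subtype.val, continuous_subtype_val⟩
  have hF' : ∀ y ∈ closedBall (0:E) 1, F y = f y := fun y hy => congrArg (fun k => k ⟨y, hy⟩) hF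
  have hG' : ∀ y ∈ closedBall (0:E) 1, G (f y) = y := fun y hy => congrArg (fun k => k ⟨y, hy⟩) hG
  obtain ⟨g, hg, hgd, -⟩ := G.continuous.exists_contDiff_approx 1 (ε := fun _ => 1/8) continuous_const (fun _ => by norm_num)
  let μ : Measure E := volume
  have hsard : μ (g '' {x | (fderiv ℝ g x).det = 0}) = 0 :=
    addHaar_image_eq_zero_of_det_fderivWithin_eq_zero μ (f' := fderiv ℝ g)
      (fun x _ => (hg.differentiable one_ne_zero x).hasFDerivAt.hasFDerivWithinAt) (fun x hx => hx)
  obtain ⟨c, hc, hcg⟩ : ∃ c, ‖c‖ < 1/8 ∧ c ∉ g '' {x | (fderiv ℝ g x).det = 0} := by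
    by_contra! hcon
    have h1 : ball (0:E) (1/8) ⊆ g '' {x | (fderiv ℝ g x).det = 0} := fun c hc => hcon c (by simpa using hc)
    have h2 := measure_mono_null h1 hsard
    exact (measure_ball_pos μ (0:E) (by norm_num : (0:ℝ) < 1/8)).ne' h2
  let Z : Set E := {z | g z = c}
  have hZd : DiscreteTopology Z := by
    rw [discreteTopology_subtype_iff]
    intro z hz
    have hdet : (fderiv ℝ g z).det ≠ 0 := fun h => hcg ⟨z, h, hz⟩
    have hs : HasStrictFDerivAt g (((fderiv ℝ g z).toContinuousLinearEquivOfDetNeZero hdet : E ≃L[ℝ] E) : E →L[ℝ] E) z := by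
      have := hg.contDiffAt.hasStrictFDerivAt (x := z) one_ne_zero
      simpa using this
    have hev : ∀ᶠ w in 𝓝[≠] z, g w ≠ c :=
      hs.hasFDerivAt.eventually_ne ⟨_, ((fderiv ℝ g z).toContinuousLinearEquivOfDetNeZero hdet).antilipschitz⟩
    rw [← disjoint_iff, disjoint_principal_right]
    exact hev
  have hZc : Z.Countable := by
    have : Countable Z := TopologicalSpace.separableSpace_iff_countable.1 inferInstance
    exact this
  have hdense : Dense (⋂ z ∈ Z, {v : E | v + z ∉ X}) := by
    refine dense_biInter_of_isOpen (fun z _ => ?_) hZc (fun z _ => ?_)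
    · exact hXc.isClosed.isOpen_compl.preimage (by fun_prop : Continuous fun v : E => v + z)
    · have h1 : Dense Xᶜ := interior_eq_empty_iff_dense_compl.1 hemp
      exact h1.preimage (Homeomorph.addRight z).isOpenMap
  have hnear : ∀ᶠ v in 𝓝 (0:E), ∀ x ∈ X, dist (g (x - v)) (g x) < 1/8 := by
    apply hXc.eventually_forall_of_forall_eventually
    intro x _
    have hcont : Continuous (fun p : E × E => dist (g (p.2 - p.1)) (g p.2)) := by
      have := hg.continuous
      fun_prop
    apply hcont.continuousAt.eventually_lt_const
    simp
  obtain ⟨v, hvZ, hv⟩ := hdense.exists_mem_open isOpen_interior ⟨0, mem_interior_iff_mem_nhds.2 hnear⟩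
  have hv := interior_subset hv
  obtain ⟨y, hy1, hy2⟩ := exists_zero (fun y => g (F y - v) - c) (by have := hg.continuous; fun_prop) (by
    intro y hy
    have hyB : y ∈ closedBall (0:E) 1 := by simpa using hy
    have h1 := hv (f y) ⟨y, hyB, rfl⟩
    have h2 := hgd (f y)
    rw [hG' y hyB] at h2
    simp only [hF' y hyB]
    rw [dist_eq_norm] at h1 h2
    have e : g (f y - v) - c - y = (g (f y - v) - g (f y)) + (g (f y) - y) - c := by abel
    rw [e]
    have h3 := norm_sub_le ((g (f y - v) - g (f y)) + (g (f y) - y)) c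
    have h4 := norm_add_le (g (f y - v) - g (f y)) (g (f y) - y)
    linarith)
  have hyB : y ∈ closedBall (0:E) 1 := by simpa using hy1
  simp only [hF' y hyB] at hy2
  have h5 := mem_iInter₂.1 hvZ (f y - v) (sub_eq_zero.1 hy2)
  exact h5 (by rw [add_sub_cancel]; exact ⟨y, hyB, rfl⟩)

lemma tile_regular {m : Set E} (e : m ≃ₜ closedBall (0:E) 1) : m ⊆ closure (interior m) := by
  intro x hx
  rw [_root_.mem_closure_iff]
  intro U hU hxU
  let ψ : closedBall (0:E) 1 → E := fun y => (e.symm y : E)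
  have hψ : Continuous ψ := by fun_prop
  have hψi : Function.Injective ψ := Subtype.val_injective.comp e.symm.injective
  let y := e ⟨x, hx⟩
  have hy : ψ y = x := by simp [ψ, y]
  have hUo : IsOpen (ψ ⁻¹' U) := hU.preimage hψ
  obtain ⟨ε, hε, hεU⟩ := Metric.isOpen_iff.1 hUo y (by simpa [hy] using hxU)
  have hyn : ‖(y:E)‖ ≤ 1 := mem_closedBall_zero_iff.1 y.2
  -- shrink towards the origin
  let s : ℝ := min (1/2) (ε / 4)
  have hs0 : 0 < s := by positivity
  have hs1 : s ≤ 1/2 := min_le_left _ _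
  have hs2 : s ≤ ε / 4 := min_le_right _ _
  have hin : ∀ w ∈ closedBall (0:E) 1, (1 - s) • (y:E) + s • w ∈ closedBall (0:E) 1 := by
    intro w hw
    exact (convex_closedBall (0:E) 1) y.2 hw (by linarith) hs0.le (by ring)
  have hdist : ∀ w ∈ closedBall (0:E) 1, dist ((1 - s) • (y:E) + s • w) y < ε := by
    intro w hw
    have hw : ‖w‖ ≤ 1 := by simpa using hw
    rw [dist_eq_norm]
    have e : (1 - s) • (y:E) + s • w - y = s • (w - y) := by module
    rw [e, norm_smul, Real.norm_eq_abs, abs_of_pos hs0]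
    have := norm_sub_le w (y:E)
    nlinarith
  classical
  let f : E → E := fun w => if h : (1 - s) • (y:E) + s • w ∈ closedBall (0:E) 1 then ψ ⟨_, h⟩ else 0
  have hf : ∀ w (hw : w ∈ closedBall (0:E) 1), f w = ψ ⟨_, hin w hw⟩ := fun w hw => dif_pos (hin w hw)
  have hfc : ContinuousOn f (closedBall 0 1) := by
    rw [continuousOn_iff_continuous_domRestrict]
    have : (closedBall (0:E) 1).domRestrict f = fun w => ψ ⟨_, hin w.1 w.2⟩ := by
      ext w; exact hf w.1 w.2
    rw [this]
    exact hψ.comp (by fun_prop)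
  have hfi : InjOn f (closedBall 0 1) := by
    intro a ha b hb hab
    rw [hf a ha, hf b hb] at hab
    have := congrArg Subtype.val (hψi hab)
    simp only [add_right_inj] at this
    exact smul_right_injective E hs0.ne' this
  obtain ⟨z, hz⟩ := interior_image_nonempty f hfc hfi
  have hsub : f '' closedBall 0 1 ⊆ m ∩ U := by
    rintro _ ⟨w, hw, rfl⟩
    rw [hf w hw]
    exact ⟨(e.symm _).2, hεU (show dist _ _ < ε from hdist w hw)⟩
  refine ⟨z, (hsub (interior_subset hz)).2, interior_mono (hsub.trans inter_subset_left) hz⟩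
end Brouwer

section Pat
variable {d : ℕ}

lemma IsTile.isCompact {m : Set (Pt d)} (h : IsTile d m) : IsCompact m := by
  obtain ⟨e⟩ := h
  have : CompactSpace (closedBall (0:Pt d) 1) := isCompact_iff_compactSpace.1 (isCompact_closedBall 0 1)
  exact isCompact_iff_compactSpace.2 e.symm.compactSpace

lemma IsTile.isPreconnected {m : Set (Pt d)} (h : IsTile d m) : IsPreconnected m := by
  obtain ⟨e⟩ := h
  have : PreconnectedSpace (closedBall (0:Pt d) 1) :=
    isPreconnected_iff_preconnectedSpace.1 (convex_closedBall 0 1).isPreconnected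
  exact isPreconnected_iff_preconnectedSpace.2 (e.symm.surjective.denseRange.preconnectedSpace e.symm.continuous)

lemma IsTile.nonempty {m : Set (Pt d)} (h : IsTile d m) : m.Nonempty := by
  obtain ⟨e⟩ := h
  exact ⟨_, (e.symm ⟨0, by simp⟩).2⟩

lemma IsTile.regular {m : Set (Pt d)} (h : IsTile d m) : m ⊆ closure (interior m) := by
  obtain ⟨e⟩ := h
  exact tile_regular e

lemma IsPattern.isCompact_supp {M : Set (Set (Pt d))} (h : IsPattern d M) : IsCompact (supp d M) :=
  h.1.isCompact_sUnion fun m hm => (h.2.2.1 m hm).isCompact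

lemma IsPattern.supp_nonempty {M : Set (Set (Pt d))} (h : IsPattern d M) : (supp d M).Nonempty := by
  obtain ⟨m, hm⟩ := h.2.1
  obtain ⟨x, hx⟩ := (h.2.2.1 m hm).nonempty
  exact ⟨x, m, hm, hx⟩

lemma IsPattern.subset {M N : Set (Set (Pt d))} (h : IsPattern d N) (hs : M ⊆ N) (hn : M.Nonempty) :
    IsPattern d M :=
  ⟨h.1.subset hs, hn, fun m hm => h.2.2.1 m (hs hm), h.2.2.2.mono hs⟩

lemma Admissible.sub {Ps : Set (Set (Set (Pt d)))} (h : Admissible d Ps) {M N : Set (Set (Pt d))}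
    (hN : N ∈ Ps) (hs : M ⊆ N) (hn : M.Nonempty) : M ∈ Ps :=
  h.subClosed N hN M ((h.pattern N hN).subset hs hn) hs

lemma supp_mono {M N : Set (Set (Pt d))} (h : M ⊆ N) : supp d M ⊆ supp d N := sUnion_subset_sUnion h

lemma supp_patTrans (t : Pt d) (M : Set (Set (Pt d))) :
    supp d (patTrans d t M) = (fun x => x + t) '' supp d M := by
  simp only [supp, patTrans, sUnion_image, image_sUnion]

lemma patRestrict_patTrans (t : Pt d) (M : Set (Set (Pt d))) (B : Set (Pt d)) :
    patTrans d t (patRestrict d M B) = patRestrict d (patTrans d t M) ((fun x => x + t) '' B) := by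
  have hint : interior ((fun x => x + t) '' B) = (fun x => x + t) '' interior B :=
    ((Homeomorph.addRight t).image_interior B).symm
  have hinj : Function.Injective (fun x : Pt d => x + t) := add_left_injective t
  ext s
  constructor
  · rintro ⟨_, ⟨m, hm, hne, rfl⟩, rfl⟩
    refine ⟨_, ⟨m, hm, rfl⟩, ?_, image_inter hinj⟩
    rw [hint, ← image_inter hinj]
    exact hne.image _
  · rintro ⟨_, ⟨m, hm, rfl⟩, hne, rfl⟩
    simp only [hint, ← image_inter hinj, image_nonempty] at hne
    exact ⟨_, ⟨m, hm, hne, rfl⟩, image_inter hinj⟩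

lemma image_boxSet (t : Pt d) (a b : Fin d → ℝ) :
    (fun x => x + t) '' boxSet d a b = boxSet d (fun j => a j + t j) (fun j => b j + t j) := by
  ext x
  constructor
  · rintro ⟨y, hy, rfl⟩ j
    have := hy j
    simp only [mem_Icc, PiLp.add_apply] at this ⊢
    constructor <;> linarith
  · intro hx
    refine ⟨x - t, fun j => ?_, by simp⟩
    have := hx j
    simp only [mem_Icc, PiLp.sub_apply] at this ⊢
    constructor <;> linarith

lemma IsBox.translate {B : Set (Pt d)} (h : IsBox d B) (t : Pt d) : IsBox d ((fun x => x + t) '' B) := by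
  obtain ⟨a, b, hab, rfl⟩ := h
  exact ⟨_, _, fun j => by simpa using hab j, image_boxSet t a b⟩

lemma mem_interior_boxSet {a b : Fin d → ℝ} {x : Pt d} (hx : ∀ j, a j < x j ∧ x j < b j) :
    x ∈ interior (boxSet d a b) := by
  have ho : IsOpen {x : Pt d | ∀ j, a j < x j ∧ x j < b j} := by
    simp only [ofPred_forall]
    refine isOpen_iInter_of_finite fun j => ?_
    have hj : Continuous fun x : Pt d => x j := by fun_prop
    exact (isOpen_lt continuous_const hj).inter (isOpen_lt hj continuous_const)
  exact interior_maximal (fun y hy j => ⟨(hy j).1.le, (hy j).2.le⟩) ho hx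

lemma IsBox.subset_closure {B : Set (Pt d)} (h : IsBox d B) : B ⊆ closure (interior B) := by
  obtain ⟨a, b, hab, rfl⟩ := h
  have hc : Convex ℝ (boxSet d a b) := by
    intro x hx y hy s t hs ht hst j
    simpa using (convex_Icc (a j) (b j)) (hx j) (hy j) hs ht hst
  have hne : (interior (boxSet d a b)).Nonempty :=
    ⟨WithLp.toLp 2 (fun j => (a j + b j) / 2), mem_interior_boxSet fun j => by
      have := hab j
      constructor <;> simp <;> linarith⟩
  rw [hc.closure_interior_eq_closure_of_nonempty_interior hne]
  exact _root_.subset_closure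

lemma IsBox.interior_nonempty {B : Set (Pt d)} (h : IsBox d B) : (interior B).Nonempty := by
  obtain ⟨a, b, hab, rfl⟩ := h
  exact ⟨WithLp.toLp 2 (fun j => (a j + b j) / 2), mem_interior_boxSet fun j => by
      have := hab j
      constructor <;> simp <;> linarith⟩

lemma IsBox.isClosed {B : Set (Pt d)} (h : IsBox d B) : IsClosed B := by
  obtain ⟨a, b, hab, rfl⟩ := h
  simp only [boxSet, ofPred_forall]
  exact isClosed_iInter fun j => isClosed_Icc.preimage (by fun_prop : Continuous fun x : Pt d => x j)

lemma IsRBox.isBox {r : ℝ} {B : Set (Pt d)} (h : IsRBox d r B) : IsBox d B := by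
  obtain ⟨a, b, hab, hB, _⟩ := h
  exact ⟨a, b, hab, hB⟩

lemma supp_patRestrict {M : Set (Set (Pt d))} (hM : IsPattern d M) {B : Set (Pt d)} (hB : IsBox d B)
    (hs : B ⊆ supp d M) : supp d (patRestrict d M B) = B := by
  apply Subset.antisymm
  · rintro x ⟨_, ⟨m, hm, _, rfl⟩, hx⟩
    exact hx.2
  · intro x hx
    let N : Set (Set (Pt d)) := {m ∈ M | (m ∩ interior B).Nonempty}
    have hNf : N.Finite := Set.Finite.subset hM.1 (sep_subset _ _)
    have hNc : IsClosed (⋃₀ N) := (hNf.isCompact_sUnion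
      fun m hm => (hM.2.2.1 m hm.1).isCompact).isClosed
    have h1 : interior B ⊆ ⋃₀ N := by
      intro y hy
      obtain ⟨m, hm, hym⟩ := hs (interior_subset hy)
      exact ⟨m, ⟨hm, y, hym, hy⟩, hym⟩
    obtain ⟨m, hm, hxm⟩ := closure_minimal h1 hNc (hB.subset_closure hx)
    exact ⟨m ∩ B, ⟨m, hm.1, hm.2, rfl⟩, hxm, hx⟩

lemma patRestrict_patRestrict {M : Set (Set (Pt d))} {B B' : Set (Pt d)} (h : B' ⊆ B) :
    patRestrict d (patRestrict d M B) B' = patRestrict d M B' := by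
  have e : ∀ m : Set (Pt d), m ∩ B ∩ B' = m ∩ B' := fun m => by
    rw [inter_assoc, inter_eq_right.2 h]
  ext s
  constructor
  · rintro ⟨_, ⟨m, hm, _, rfl⟩, ⟨x, hx, hx'⟩, rfl⟩
    exact ⟨m, hm, ⟨x, hx.1, hx'⟩, e m⟩
  · rintro ⟨m, hm, ⟨x, hx, hx'⟩, rfl⟩
    exact ⟨_, ⟨m, hm, ⟨x, hx, interior_mono h hx'⟩, rfl⟩, ⟨x, ⟨hx, h (interior_subset hx')⟩, hx'⟩, (e m).symm⟩

lemma patRestrict_eq_of_subset {M N : Set (Set (Pt d))} (hN : IsPattern d N) (hMN : M ⊆ N)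
    {B : Set (Pt d)} (hs : B ⊆ supp d M) : patRestrict d M B = patRestrict d N B := by
  ext s
  constructor
  · rintro ⟨m, hm, hne, rfl⟩
    exact ⟨m, hMN hm, hne, rfl⟩
  · rintro ⟨q, hq, ⟨x, hxq, hxB⟩, rfl⟩
    refine ⟨q, ?_, ⟨x, hxq, hxB⟩, rfl⟩
    obtain ⟨y, hyB, hyq⟩ := _root_.mem_closure_iff.1 ((hN.2.2.1 q hq).regular hxq) _ isOpen_interior hxB
    by_contra hqM
    have hfin : M.Finite := hN.1.subset hMN
    -- every tile of `M` misses `interior q` up to its frontier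
    have hd : ∀ m ∈ M, Disjoint (interior q) (interior m) := fun m hm => by
      rw [disjoint_iff_inter_eq_empty]
      exact hN.2.2.2 hq (hMN hm) (fun h => hqM (h ▸ hm))
    have hden : Dense (⋂ m ∈ M, (frontier m)ᶜ) := by
      refine dense_biInter_of_isOpen (fun m _ => isClosed_frontier.isOpen_compl) hfin.countable (fun m hm => ?_)
      rw [← interior_eq_empty_iff_dense_compl]
      exact interior_frontier (hN.2.2.1 m (hMN hm)).isCompact.isClosed
    obtain ⟨z, hz, hzU⟩ := hden.exists_mem_open (isOpen_interior.inter isOpen_interior) ⟨y, hyB, hyq⟩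
    obtain ⟨m, hm, hzm⟩ := hs (interior_subset hzU.1)
    have hzf := mem_iInter₂.1 hz m hm
    have hzi : z ∈ interior m := by
      by_contra hzi
      exact hzf ⟨subset_closure hzm, hzi⟩
    exact disjoint_left.1 (hd m hm) hzU.2 hzi

lemma patTrans_patTrans (s t : Pt d) (M : Set (Set (Pt d))) :
    patTrans d s (patTrans d t M) = patTrans d (t + s) M := by
  simp only [patTrans, image_image, add_assoc]

lemma patTrans_zero (M : Set (Set (Pt d))) : patTrans d 0 M = M := by
  simp [patTrans]

lemma Admissible.extend' {Ps : Set (Set (Set (Pt d)))} (h : Admissible d Ps) {P : Set (Set (Pt d))}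
    (hP : P ∈ Ps) {x : Pt d} (hx : x ∈ supp d P) {r : ℝ} (hr : 0 < r) :
    ∃ Q ∈ Ps, P ⊆ Q ∧ closedBall x r ⊆ supp d Q := by
  obtain ⟨Q, hQ, hPQ, hb⟩ := h.extend (patTrans d (-x) P) (h.transClosed _ _ hP)
    (by rw [supp_patTrans]; exact ⟨x, hx, by simp⟩) r hr
  refine ⟨patTrans d x Q, h.transClosed _ _ hQ, ?_, ?_⟩
  · have : P = patTrans d x (patTrans d (-x) P) := by
      rw [patTrans_patTrans]; simp [patTrans_zero]
    rw [this]
    exact image_mono hPQ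
  · rw [supp_patTrans]
    intro y hy
    refine ⟨y - x, hb ?_, by simp⟩
    simpa [dist_eq_norm] using hy

lemma exists_closedBall_of_rOut_lt {P : Set (Set (Pt d))} (hP : IsPattern d P) {s : ℝ}
    (h : rOut d P < s) : ∃ x, supp d P ⊆ closedBall x s := by
  obtain ⟨R, hR⟩ := hP.isCompact_supp.isBounded.subset_closedBall 0
  have hne : {r : ℝ | ∃ x : Pt d, supp d P ⊆ closedBall x r}.Nonempty := ⟨R, 0, hR⟩
  obtain ⟨r, ⟨x, hx⟩, hr⟩ := exists_lt_of_csInf_lt hne h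
  exact ⟨x, hx.trans (closedBall_subset_closedBall hr.le)⟩

lemma rOut_le {P : Set (Set (Pt d))} (hP : IsPattern d P) {x : Pt d} {s : ℝ}
    (h : supp d P ⊆ closedBall x s) : rOut d P ≤ s := by
  refine csInf_le ⟨0, ?_⟩ ⟨x, h⟩
  rintro r ⟨y, hy⟩
  obtain ⟨z, hz⟩ := hP.supp_nonempty
  exact dist_nonneg.trans (hy hz)

lemma le_of_closedBall_subset [NeZero d] {x y : Pt d} {r s : ℝ} (hs : 0 ≤ s)
    (h : closedBall x r ⊆ closedBall y s) : r ≤ s := by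
  rcases lt_or_ge r 0 with hr | hr
  · linarith
  have hd : 0 < d := Nat.pos_of_ne_zero (NeZero.ne d)
  let e : Pt d := EuclideanSpace.single ⟨0, hd⟩ 1
  have he : ‖e‖ = 1 := by simp [e]
  have h1 := h (show x + r • e ∈ closedBall x r by simp [norm_smul, he, abs_of_nonneg hr])
  have h2 := h (show x - r • e ∈ closedBall x r by simp [dist_eq_norm, norm_smul, he, abs_of_nonneg hr])
  rw [mem_closedBall] at h1 h2
  have h3 := dist_triangle_right (x + r • e) (x - r • e) y
  have h4 : dist (x + r • e) (x - r • e) = 2 * r := by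
    rw [dist_eq_norm, show x + r • e - (x - r • e) = (2 * r) • e by module, norm_smul, he]
    simp [abs_of_nonneg hr]
  linarith

lemma le_rOut [NeZero d] {P : Set (Set (Pt d))} (hP : IsPattern d P) {x : Pt d} {r : ℝ}
    (h : closedBall x r ⊆ supp d P) : r ≤ rOut d P := by
  obtain ⟨R, hR⟩ := hP.isCompact_supp.isBounded.subset_closedBall 0
  refine le_csInf ⟨R, 0, hR⟩ ?_
  rintro s ⟨y, hy⟩
  obtain ⟨z, hz⟩ := hP.supp_nonempty
  exact le_of_closedBall_subset (dist_nonneg.trans (hy hz)) (h.trans hy)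

lemma le_rIn [NeZero d] {P : Set (Set (Pt d))} (hP : IsPattern d P) {x : Pt d} {r : ℝ}
    (h : closedBall x r ⊆ supp d P) : r ≤ rIn d P := by
  obtain ⟨R, hR⟩ := hP.isCompact_supp.isBounded.subset_closedBall 0
  refine le_csSup ⟨R, ?_⟩ ⟨x, h⟩
  rintro s ⟨y, hy⟩
  obtain ⟨z, hz⟩ := hP.supp_nonempty
  exact le_of_closedBall_subset (dist_nonneg.trans (hR hz)) (hy.trans hR)

lemma exists_closedBall_of_lt_rIn {P : Set (Set (Pt d))} {s : ℝ}
    (h : s < rIn d P) : ∃ x, closedBall x s ⊆ supp d P := by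
  have hne : {r : ℝ | ∃ x : Pt d, closedBall x r ⊆ supp d P}.Nonempty := ⟨-1, 0, by simp⟩
  obtain ⟨r, ⟨x, hx⟩, hr⟩ := exists_lt_of_lt_csSup hne h
  exact ⟨x, (closedBall_subset_closedBall hr.le).trans hx⟩

lemma Admissible.tile_diam {Ps : Set (Set (Set (Pt d)))} (h : Admissible d Ps) :
    ∃ T : ℝ, 0 < T ∧ ∀ P ∈ Ps, ∀ m ∈ P, ∀ x ∈ m, ∀ y ∈ m, dist x y ≤ T := by
  obtain ⟨rmin, rmax, h0, h1, h2⟩ := h.tileBounds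
  refine ⟨2 * (rmax + 1), by linarith, fun P hP m hm x hx y hy => ?_⟩
  have hmP : {m} ∈ Ps := h.sub hP (singleton_subset_iff.2 hm) (singleton_nonempty m)
  obtain ⟨z, hz⟩ := exists_closedBall_of_rOut_lt (h.pattern _ hmP)
    (lt_of_le_of_lt (h2 m hmP).2.2 (lt_add_one rmax))
  have hx' := hz (show x ∈ supp d {m} from ⟨m, rfl, hx⟩)
  have hy' := hz (show y ∈ supp d {m} from ⟨m, rfl, hy⟩)
  rw [mem_closedBall] at hx' hy'
  have := dist_triangle_right x y z
  linarith

lemma Admissible.eq_empty {Ps : Set (Set (Set (Pt 0)))} (h : Admissible 0 Ps) : Ps = ∅ := by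
  rw [eq_empty_iff_forall_notMem]
  intro P hP
  obtain ⟨rmin, rmax, h0, h1, h2⟩ := h.tileBounds
  obtain ⟨m, hm⟩ := (h.pattern P hP).2.1
  have hmP : {m} ∈ Ps := h.sub hP (singleton_subset_iff.2 hm) (singleton_nonempty m)
  obtain ⟨x, hx⟩ := ((h.pattern P hP).2.2.1 m hm).nonempty
  have h3 : rIn 0 {m} = 0 := by
    apply Real.sSup_of_not_bddAbove
    rintro ⟨b, hb⟩
    have : b + 1 ≤ b := hb ⟨x, fun y _ => ⟨m, rfl, by rwa [Subsingleton.elim y x]⟩⟩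
    linarith
  have := (h2 m hmP).1
  linarith

lemma norm_le_of_coord {x : Pt d} {s : ℝ} (hs : 0 ≤ s) (h : ∀ j, |x j| ≤ s) : ‖x‖ ≤ d * s := by
  apply le_of_sq_le_sq _ (by positivity)
  rw [EuclideanSpace.norm_sq_eq]
  calc ∑ i, ‖x i‖ ^ 2 ≤ ∑ i : Fin d, s ^ 2 := by
        gcongr with i; exact h i
    _ = d * s ^ 2 := by simp
    _ ≤ (d * s) ^ 2 := by
        rw [mul_pow]
        have : (d : ℝ) ≤ d ^ 2 := by exact_mod_cast Nat.le_self_pow two_ne_zero d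
        gcongr

/-- The cube with centre `x` and half-side `s`. -/
def cube (x : Pt d) (s : ℝ) : Set (Pt d) := boxSet d (fun j => x j - s) (fun j => x j + s)

lemma cube_isRBox (x : Pt d) {s : ℝ} (hs : 0 < s) : IsRBox d (2 * s) (cube x s) :=
  ⟨_, _, fun j => by linarith, rfl, fun j => by constructor <;> linarith⟩

lemma cube_subset (x : Pt d) {s : ℝ} (hs : 0 < s) : cube x s ⊆ closedBall x (d * s) := by
  intro y hy
  rw [mem_closedBall, dist_eq_norm]
  refine norm_le_of_coord hs.le fun j => ?_
  have := hy j
  simp only [mem_Icc] at this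
  rw [PiLp.sub_apply, abs_le]
  constructor <;> linarith

lemma closedBall_subset_interior_cube (x : Pt d) {s r : ℝ} (hr : r < s) :
    closedBall x r ⊆ interior (cube x s) := by
  intro y hy
  refine mem_interior_boxSet fun j => ?_
  rw [mem_closedBall, dist_eq_norm] at hy
  have h1 := (PiLp.norm_apply_le (y - x) j).trans hy
  rw [PiLp.sub_apply, Real.norm_eq_abs, abs_le] at h1
  constructor <;> linarith

/-- Centre and ball estimates for an `r`-box. -/
lemma IsRBox.center {r : ℝ} (hr : 0 < r) {B : Set (Pt d)} (h : IsRBox d r B) :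
    ∃ x : Pt d, x ∈ B ∧ B ⊆ closedBall x (d * r) ∧ closedBall x (r / 2) ⊆ B := by
  obtain ⟨a, b, hab, rfl, hr'⟩ := h
  refine ⟨WithLp.toLp 2 (fun j => (a j + b j) / 2), ?_, ?_, ?_⟩
  · intro j
    have := hab j
    constructor <;> simp <;> linarith
  · intro y hy
    rw [mem_closedBall, dist_eq_norm]
    refine norm_le_of_coord hr.le fun j => ?_
    have := hy j
    have := hr' j
    simp only [mem_Icc] at *
    rw [PiLp.sub_apply, abs_le]
    constructor <;> simp only [] <;> linarith
  · intro y hy j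
    rw [mem_closedBall, dist_eq_norm] at hy
    have h1 := (PiLp.norm_apply_le _ j).trans hy
    rw [PiLp.sub_apply, Real.norm_eq_abs, abs_le] at h1
    have := hr' j
    simp only [mem_Icc] at *
    constructor <;> linarith

lemma forward [NeZero d] {Ps : Set (Set (Set (Pt d)))} (hadm : Admissible d Ps)
    (h : LinearlyRepetitive d Ps) : ∃ c : ℝ, 0 < c ∧ ∀ r : ℝ, 1 ≤ r → ∀ P ∈ RPatterns d Ps r,
        ∀ Q ∈ RPatterns d Ps (c * r), BoxSubpattern d P Q := by
  obtain ⟨c, hc, hLR⟩ := h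
  obtain ⟨T, hT, hdiam⟩ := hadm.tile_diam
  refine ⟨2 * (c * (d + 1 + T) + T), by positivity, ?_⟩
  rintro r hr _ ⟨P0, hP0, B, hB, hBs, rfl⟩ _ ⟨Q0, hQ0, C, hC, hCs, rfl⟩
  have hr0 : 0 < r := by linarith
  obtain ⟨x0, hx0, hBx, -⟩ := hB.center hr0
  obtain ⟨y0, hy0, -, hCy⟩ := hC.center (by positivity)
  set R : ℝ := d * r + 1 with hR
  have hR1 : 1 ≤ R := by have : 0 ≤ d * r := by positivity
                         linarith
  obtain ⟨P1, hP1, hP01, hballP1⟩ := hadm.extend' hP0 (hBs hx0) (r := R) (by linarith)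
  let P' : Set (Set (Pt d)) := {m ∈ P1 | (m ∩ closedBall x0 R).Nonempty}
  have hP'1 : P' ⊆ P1 := sep_subset _ _
  have hballP' : closedBall x0 R ⊆ supp d P' := by
    intro y hy
    obtain ⟨m, hm, hym⟩ := hballP1 hy
    exact ⟨m, ⟨hm, y, hym, hy⟩, hym⟩
  have hP'ne : P'.Nonempty := by
    obtain ⟨m, hm, -⟩ := hballP' (mem_closedBall_self (by linarith))
    exact ⟨m, hm⟩
  have hP' : P' ∈ Ps := hadm.sub hP1 hP'1 hP'ne
  have hP'pat := hadm.pattern _ hP'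
  have hout : rOut d P' ≤ R + T := by
    refine rOut_le hP'pat (x := x0) ?_
    rintro y ⟨m, ⟨hm, z, hzm, hz⟩, hym⟩
    have h1 := hdiam P1 hP1 m hm y hym z hzm
    rw [mem_closedBall] at hz ⊢
    have := dist_triangle y z x0
    linarith
  have hout1 : 1 ≤ rOut d P' := hR1.trans (le_rOut hP'pat hballP')
  let Q' : Set (Set (Pt d)) := {q ∈ Q0 | q ⊆ C}
  have hQ'0 : Q' ⊆ Q0 := sep_subset _ _
  set ρ : ℝ := 2 * (c * (d + 1 + T) + T) * r / 2 - T with hρ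
  have hρ1 : c * (R + T) ≤ ρ := by
    have h1 : R + T ≤ r * (d + 1 + T) := by nlinarith
    have h2 : c * (R + T) ≤ c * (r * (d + 1 + T)) := by gcongr
    have h3 : T ≤ T * r := by nlinarith
    have h4 : ρ = c * (r * (d + 1 + T)) + (T * r - T) := by rw [hρ]; ring
    linarith
  have hρ0 : 0 ≤ ρ := le_trans (by positivity) hρ1
  have hballQ' : closedBall y0 ρ ⊆ supp d Q' := by
    intro z hz
    rw [mem_closedBall] at hz
    obtain ⟨q, hq, hzq⟩ := hCs (hCy (by rw [mem_closedBall]; linarith : z ∈ _))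
    refine ⟨q, ⟨hq, fun w hw => hCy ?_⟩, hzq⟩
    have h1 := hdiam Q0 hQ0 q hq w hw z hzq
    have h2 := dist_triangle w z y0
    rw [mem_closedBall]
    linarith
  have hQ'ne : Q'.Nonempty := by
    obtain ⟨m, hm, -⟩ := hballQ' (mem_closedBall_self hρ0)
    exact ⟨m, hm⟩
  have hQ' : Q' ∈ Ps := hadm.sub hQ0 hQ'0 hQ'ne
  have hin : c * rOut d P' ≤ rIn d Q' := by
    have h1 := le_rIn (hadm.pattern _ hQ') hballQ'
    have h2 : c * rOut d P' ≤ c * (R + T) := by gcongr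
    linarith
  obtain ⟨t, ht⟩ := hLR P' hP' hout1 Q' hQ' hin
  have hBP' : B ⊆ supp d P' := hBx.trans ((closedBall_subset_closedBall (by linarith)).trans hballP')
  have hBt : (fun x => x + t) '' B ⊆ supp d (patTrans d t P') := by
    rw [supp_patTrans]; exact image_mono hBP'
  have hBC : (fun x => x + t) '' B ⊆ C := by
    refine hBt.trans ((supp_mono ht).trans ?_)
    rintro z ⟨q, hq, hzq⟩
    exact hq.2 hzq
  refine ⟨t, (fun x => x + t) '' B, hB.isBox.translate t, ?_, ?_⟩
  · rw [supp_patRestrict (hadm.pattern _ hQ0) hC.isBox hCs]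
    exact hBC
  · rw [patRestrict_patRestrict hBC, ← patRestrict_eq_of_subset (hadm.pattern _ hQ0) (ht.trans hQ'0) hBt,
      ← patRestrict_patTrans, patRestrict_eq_of_subset (hadm.pattern _ hP1) hP01 hBs,
      patRestrict_eq_of_subset (hadm.pattern _ hP1) hP'1 hBP']

lemma backward [NeZero d] {Ps : Set (Set (Set (Pt d)))} (hadm : Admissible d Ps)
    (h : ∃ c : ℝ, 0 < c ∧ ∀ r : ℝ, 1 ≤ r → ∀ P ∈ RPatterns d Ps r,
        ∀ Q ∈ RPatterns d Ps (c * r), BoxSubpattern d P Q) : LinearlyRepetitive d Ps := by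
  obtain ⟨c, hc, hbox⟩ := h
  refine ⟨d * (c * 5) + 1, by positivity, fun P hP hP1 Q hQ hPQ => ?_⟩
  set ρ := rOut d P with hρ
  have hPpat := hadm.pattern P hP
  have hQpat := hadm.pattern Q hQ
  obtain ⟨y, hy⟩ := exists_closedBall_of_rOut_lt hPpat (show rOut d P < 2 * ρ by linarith)
  obtain ⟨x, hx⟩ := hPpat.supp_nonempty
  have hPx : supp d P ⊆ closedBall x (4 * ρ) := by
    intro z hz
    have h1 := hy hz
    have h2 := hy hx
    rw [mem_closedBall] at *
    have := dist_triangle_right z x y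
    linarith
  have hd : 0 < d := Nat.pos_of_ne_zero (NeZero.ne d)
  obtain ⟨P1, hP1', hPP1, hball⟩ := hadm.extend' hP hx (r := d * (5 * ρ)) (by positivity)
  have hs : 0 < 5 * ρ := by linarith
  have hBs : cube x (5 * ρ) ⊆ supp d P1 := (cube_subset x hs).trans hball
  have hPB : supp d P ⊆ interior (cube x (5 * ρ)) :=
    hPx.trans (closedBall_subset_interior_cube x (by linarith))
  obtain ⟨q, hq⟩ := exists_closedBall_of_lt_rIn (P := Q) (s := d * (c * (5 * ρ))) (by nlinarith)
  have hs' : 0 < c * (5 * ρ) := by positivity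
  have hCs : cube q (c * (5 * ρ)) ⊆ supp d Q := (cube_subset q hs').trans hq
  have hC : IsRBox d (c * (2 * (5 * ρ))) (cube q (c * (5 * ρ))) := by
    have := cube_isRBox q hs'
    rwa [show c * (2 * (5 * ρ)) = 2 * (c * (5 * ρ)) by ring]
  have hB := cube_isRBox x hs
  obtain ⟨t, B', hB', hB's, heq⟩ := hbox (2 * (5 * ρ)) (by linarith) _ ⟨P1, hP1', _, hB, hBs, rfl⟩
    _ ⟨Q, hQ, _, hC, hCs, rfl⟩
  rw [supp_patRestrict hQpat hC.isBox hCs] at hB's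
  rw [patRestrict_patRestrict hB's] at heq
  have hBB' : (fun z => z + t) '' cube x (5 * ρ) = B' := by
    have h1 := congrArg (supp d) heq
    rwa [supp_patTrans, supp_patRestrict (hadm.pattern _ hP1') hB.isBox hBs,
      supp_patRestrict hQpat hB' (hB's.trans hCs)] at h1
  refine ⟨t, ?_⟩
  rintro _ ⟨p, hp, rfl⟩
  have hpB : p ⊆ interior (cube x (5 * ρ)) := fun z hz => hPB ⟨p, hp, hz⟩
  have hpne := (hPpat.2.2.1 p hp).nonempty
  have hmem : (fun z => z + t) '' p ∈ patRestrict d Q B' := by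
    rw [← heq]
    refine ⟨p, ⟨p, hPP1 hp, ?_, ?_⟩, rfl⟩
    · rwa [inter_eq_left.2 hpB]
    · rw [inter_eq_left.2 (hpB.trans interior_subset)]
  obtain ⟨m, hm, -, hpm⟩ := hmem
  have hint : (fun z => z + t) '' p ⊆ interior B' := by
    rw [← hBB', show interior ((fun z => z + t) '' cube x (5 * ρ)) = (fun z => z + t) '' interior (cube x (5 * ρ)) from
      ((Homeomorph.addRight t).image_interior _).symm]
    exact image_mono hpB
  have hcl : IsClosed B' := hB'.isClosed
  have hmB' : m ⊆ interior B' := by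
    refine (hQpat.2.2.1 m hm).isPreconnected.subset_left_of_subset_union isOpen_interior hcl.isOpen_compl
      (disjoint_compl_right.mono_left interior_subset) ?_ ?_
    · intro z hz
      by_cases hzB : z ∈ B'
      · left; exact hint (hpm ▸ ⟨hz, hzB⟩)
      · right; exact hzB
    · obtain ⟨z, hz⟩ := hpne
      have h1 : z + t ∈ (fun z => z + t) '' p := ⟨z, hz, rfl⟩
      refine ⟨z + t, ?_, hint h1⟩
      rw [hpm] at h1
      exact h1.1
  change (fun z => z + t) '' p ∈ Q
  rw [hpm, inter_eq_left.2 (hmB'.trans interior_subset)]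
  exact hm

end Pat

/-- Proposition 3.4. Equivalence between linear repetitivity and its
box-pattern version. -/
theorem linearlyRepetitive_iff_box (d : ℕ) (Ps : Set (Set (Set (Pt d))))
    (hadm : Admissible d Ps) :
    LinearlyRepetitive d Ps ↔
      ∃ c : ℝ, 0 < c ∧ ∀ r : ℝ, 1 ≤ r → ∀ P ∈ RPatterns d Ps r,
        ∀ Q ∈ RPatterns d Ps (c * r), BoxSubpattern d P Q := by
  rcases Nat.eq_zero_or_pos d with rfl | hd
  · have := hadm.eq_empty
    subst this
    exact ⟨fun _ => ⟨1, one_pos, fun r _ P hP => by obtain ⟨P0, hP0, _⟩ := hP; exact absurd hP0 (by simp)⟩,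
      fun _ => ⟨1, one_pos, fun P hP => absurd hP (by simp)⟩⟩
  · have : NeZero d := ⟨hd.ne'⟩
    exact ⟨forward hadm, backward hadm⟩

end
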